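/- Let n > q ≥ 3 and 3 ≤ k ≤ q, and let Π be a smooth Nambu structure of order q on an open neighborhood U of 0 in ℝⁿ with Π(0) = 0 and with linear part Π_{k,q} at 0. Then there is an open neighborhood W ⊆ U of 0 such that the sliced q-vector field Λ := (e*_{k+1} ∧ ⋯ ∧ e*_{q+1}) ⌟ Π is a Nambu structure of order k−1 on W, and the linear part of Λ at 0 equals (e*_{k+1} ∧ ⋯ ∧ e*_{q+1}) ⌟ Π_{k,q}, which is of the form s · ∑_{j=1}^{k} (−1)^{j−1} x_j e₁ ∧ ⋯ ∧ ê_j ∧ ⋯ ∧ e_k for a sign s ∈ {+1, −1} (i.e. the nondegenerate Type 1 elliptic linear Nambu structure of order k−1 in the coordinates x₁,…,x_k, up to sign). -/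

import Mathlib

open scoped ContDiff

namespace NambuLin

/-- Index set for the standard basis of the `q`-th exterior power of `ℝⁿ`:
increasing multi-indices, encoded as `q`-element subsets of `Fin n`. -/
abbrev Idx (n q : ℕ) := {s : Finset (Fin n) // s.card = q}

/-- A `q`-vector of `ℝⁿ`, given by its coordinates in the standard basis
`{e_{i₁} ∧ ⋯ ∧ e_{i_q}}` of `⋀^q(ℝⁿ)`. -/
abbrev MultiVec (n q : ℕ) := Idx n q → ℝ

/-- The Jacobian matrix of a map `φ : ℝⁿ → ℝⁿ` at a point `x`. -/
noncomputable def jac {n : ℕ} (φ : (Fin n → ℝ) → (Fin n → ℝ)) (x : Fin n → ℝ) :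
    Matrix (Fin n) (Fin n) ℝ :=
  Matrix.of fun i j => fderiv ℝ φ x (Pi.single j 1) i

/-- The `q`-th exterior power `⋀^q A` of a matrix `A`, acting on `q`-vectors in
coordinates: `((⋀^q A) w)_J = ∑_I det(A[J,I]) w_I`. -/
noncomputable def extPow (n q : ℕ) (A : Matrix (Fin n) (Fin n) ℝ) (w : MultiVec n q) :
    MultiVec n q :=
  fun J => ∑ I : Idx n q,
    (A.submatrix (J.1.orderEmbOfFin J.2) (I.1.orderEmbOfFin I.2)).det * w I

/-- The constant `q`-vector `e₁ ∧ ⋯ ∧ e_q` in coordinates. -/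
def stdVec (n q : ℕ) : MultiVec n q :=
  fun J => if (J : Finset (Fin n)) = Finset.univ.filter (fun i : Fin n => (i : ℕ) < q) then 1 else 0

/-- `φ` is a `C^∞` diffeomorphism from the open set `W` onto the open set `φ '' W`. -/
def IsSmoothDiffeoOn {n : ℕ} (φ : (Fin n → ℝ) → (Fin n → ℝ)) (W : Set (Fin n → ℝ)) : Prop :=
  IsOpen W ∧ IsOpen (φ '' W) ∧ ContDiffOn ℝ ∞ φ W ∧
    ∃ ψ : (Fin n → ℝ) → (Fin n → ℝ), ContDiffOn ℝ ∞ ψ (φ '' W) ∧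
      (∀ x ∈ W, ψ (φ x) = x) ∧ (∀ y ∈ φ '' W, φ (ψ y) = y)

/-- `P` is a (smooth) Nambu structure of order `q` on `U`: it is a smooth `q`-vector
field, and around every point where it does not vanish there is a local `C^∞`
coordinate system in which it becomes the constant `q`-vector `e₁ ∧ ⋯ ∧ e_q`. -/
def IsNambu (n q : ℕ) (P : (Fin n → ℝ) → MultiVec n q) (U : Set (Fin n → ℝ)) : Prop :=
  ContDiffOn ℝ ∞ P U ∧
    ∀ p ∈ U, P p ≠ 0 →
      ∃ W, p ∈ W ∧ W ⊆ U ∧ ∃ φ, IsSmoothDiffeoOn φ W ∧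
        ∀ x ∈ W, extPow n q (jac φ x) (P x) = stdVec n q

/-- The signs `ε_j` (`= 1` for the first `k` indices, `= -1` afterwards;
`0`-based indexing, so `ε_j = 1` iff `j < k`). -/
def eps {n : ℕ} (k : ℕ) (j : Fin n) : ℝ := if (j : ℕ) < k then 1 else -1

/-- The set of indices `{1, …, q+1}` (in `0`-based form: `{0,…,q}`). -/
def topIdx (n q : ℕ) : Finset (Fin n) := Finset.univ.filter (fun i : Fin n => (i : ℕ) < q + 1)

/-- The nondegenerate Type 1 linear Nambu structure `Π_{k,q}` of order `q` and
signature `(k, q+1-k)`: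
`Π_{k,q}(x) = ∑_{j=1}^{q+1} (−1)^{j−1} ε_j x_j e₁ ∧ ⋯ ∧ ê_j ∧ ⋯ ∧ e_{q+1}`
(here written with `0`-based indices `j`, whence the sign `(−1)^j`). -/
def modelPi (n q k : ℕ) (x : Fin n → ℝ) : MultiVec n q :=
  fun J => ∑ j : Fin n,
    if ((j : ℕ) < q + 1 ∧ (J : Finset (Fin n)) = (topIdx n q).erase j)
    then (-1 : ℝ) ^ (j : ℕ) * eps k j * x j else 0

/-- The shuffle sign `(−1)^{#{(s,t) ∈ S × K : s > t}}`: for disjoint increasing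
multi-indices `S, K` one has `e*_S ∧ e*_K = shufSign S K · e*_{S ∪ K}`. -/
def shufSign {n : ℕ} (S K : Finset (Fin n)) : ℝ :=
  (-1 : ℝ) ^ (((S ×ˢ K).filter fun p : Fin n × Fin n => p.2 < p.1).card)

/-- The contraction `e*_S ⌟ w` of a `q`-vector `w` with the basis covector
`e*_S = e*_{s₁} ∧ ⋯ ∧ e*_{s_r}` (`S = {s₁ < ⋯ < s_r}`, `r = q - m`), determined by
`⟨e*_K, e*_S ⌟ w⟩ = ⟨e*_S ∧ e*_K, w⟩`: its `K`-th coordinate is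
`shufSign S K · w_{S ∪ K}` when `S, K` are disjoint (and `0` otherwise, in
accordance with the graded pairing). -/
def contr (n q m : ℕ) (S : Finset (Fin n)) (w : MultiVec n q) : MultiVec n m :=
  fun K => if h : Disjoint S (K : Finset (Fin n)) ∧ (S ∪ (K : Finset (Fin n))).card = q
    then shufSign S K.1 * w ⟨S ∪ K.1, h.2⟩ else 0

/-- The set of indices `{k+1, …, q+1}` (in `0`-based form: `{k,…,q}`), so that
`e*_{k+1} ∧ ⋯ ∧ e*_{q+1}` corresponds to `sliceIdx n q k`. -/
def sliceIdx (n q k : ℕ) : Finset (Fin n) :=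
  Finset.univ.filter fun i : Fin n => k ≤ (i : ℕ) ∧ (i : ℕ) < q + 1

/-- The elliptic linear Nambu structure of order `k-1` in the coordinates
`x₁,…,x_k`: `∑_{j=1}^{k} (−1)^{j−1} x_j e₁ ∧ ⋯ ∧ ê_j ∧ ⋯ ∧ e_k`
(written with `0`-based indices `j`, whence the sign `(−1)^j`). -/
def ellipticSmall (n k : ℕ) (x : Fin n → ℝ) : MultiVec n (k - 1) :=
  fun J => ∑ j : Fin n,
    if ((j : ℕ) < k ∧
        (J : Finset (Fin n)) = (Finset.univ.filter fun i : Fin n => (i : ℕ) < k).erase j)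
    then (-1 : ℝ) ^ (j : ℕ) * x j else 0

/-!
Write `Λ = e*_S ⌟ Π`. Near a point where `Λ_K ≠ 0`, let `φ` straighten `Π` to `e₁ ∧ ⋯ ∧ e_q` and
take the coordinates `Y = (x_K, x_S, φ_{q+1}, …, φ_n)`. The number `⟨dY_J, Λ⟩ = ⟨dx_S ∧ dY_J, Π⟩`
vanishes whenever `J` meets the `x_S` block (a covector is repeated) or the `φ` block
(`dφ_j ⌟ Π = 0` for `j > q`), so that `Y_* Λ = Λ_K e₁ ∧ ⋯ ∧ e_m`. Moreover
`⟨dx_S ∧ dx_K, Π⟩ = Λ_K ≠ 0` says exactly that `Y` is a chart. As the order `m` is positive, the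
factor is then normalised away by replacing the first coordinate with a function `H` whose partial
derivative along it is `1 / Λ_K`.
-/

section Multivectors

variable {n m : ℕ}

/-- The increasing enumeration `i₁ < ⋯ < i_m` of a multi-index. -/
abbrev Idx.emb (I : Idx n m) : Fin m ↪o Fin n := I.1.orderEmbOfFin I.2

theorem Idx.emb_mem (I : Idx n m) (a : Fin m) : I.emb a ∈ I.1 := I.1.orderEmbOfFin_mem I.2 a

theorem Idx.exists_emb_eq {I : Idx n m} {i : Fin n} (h : i ∈ I.1) : ∃ a, I.emb a = i := by
  rwa [← Finset.mem_coe, ← I.1.range_orderEmbOfFin I.2] at h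

/-- The basis covectors `e*_{i₁}, …, e*_{i_m}` attached to a multi-index `i₁ < ⋯ < i_m`; covectors
are identified with their coordinate vectors. -/
def coframe (I : Idx n m) (i : Fin m) : Fin n → ℝ := Pi.single (I.emb i) 1

/-- The alternating form `α ↦ ⟨α₁ ∧ ⋯ ∧ α_m, w⟩` on covectors defined by an `m`-vector `w`. -/
noncomputable def pairing (w : MultiVec n m) : (Fin n → ℝ) [⋀^Fin m]→ₗ[ℝ] ℝ :=
  ∑ I, w I • Matrix.detRowAlternating.compLinearMap (LinearMap.funLeft ℝ ℝ I.emb)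

theorem pairing_apply (w : MultiVec n m) (α : Fin m → Fin n → ℝ) :
    pairing w α = ∑ I, w I * (Matrix.of fun i j => α i (I.emb j)).det := by
  change AlternatingMap.toMultilinearMapLM (S := ℝ) (pairing w) α = _
  rw [pairing, map_sum, sum_apply]
  rfl

theorem extPow_eq_pairing (A : Matrix (Fin n) (Fin n) ℝ) (w : MultiVec n m) (J : Idx n m) :
    extPow n m A w J = pairing w fun i => A (J.emb i) := by
  rw [pairing_apply]
  exact Finset.sum_congr rfl fun I _ => mul_comm _ _

open Set.powersetCard in
theorem pairing_apply_coframe (f : (Fin n → ℝ) [⋀^Fin m]→ₗ[ℝ] ℝ) :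
    pairing (fun I => f (coframe I)) = f := by
  ext α
  let e : Set.powersetCard (Fin n) m ≃ Idx n m :=
    ⟨fun x => ⟨x.1, x.2⟩, fun x => ⟨x.1, x.2⟩, fun _ => rfl, fun _ => rfl⟩
  have expand : f α = exteriorPower.alternatingMapLinearEquiv f (exteriorPower.ιMulti ℝ m α) := by
    simp
  rw [expand, ← ((Pi.basisFun ℝ (Fin n)).exteriorPower m).sum_repr (exteriorPower.ιMulti ℝ m α),
    map_sum, pairing_apply]
  refine (Fintype.sum_equiv e _ _ fun K => ?_).symm
  rw [map_smul, exteriorPower.basis_repr_apply, exteriorPower.ιMultiDual_apply_ιMulti,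
    exteriorPower.basis_apply, smul_eq_mul, exteriorPower.ιMulti_family,
    exteriorPower.alternatingMapLinearEquiv_apply_ιMulti, mul_comm]
  congr 2
  ext i j
  simp only [Function.comp_apply, ofFinEmbEquiv_symm_apply, Pi.basisFun_apply]
  rfl

theorem Idx.exists_emb_notMem {I J : Idx n m} (h : I ≠ J) : ∃ a, J.emb a ∉ I.1 := by
  by_contra! hJ
  refine h (Subtype.ext (Finset.eq_of_subset_of_card_le (fun j hj => ?_) (by rw [I.2, J.2])).symm)
  obtain ⟨a, rfl⟩ := Idx.exists_emb_eq hj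
  exact hJ a

theorem pairing_coframe (w : MultiVec n m) (J : Idx n m) : pairing w (coframe J) = w J := by
  rw [pairing_apply, Finset.sum_eq_single J]
  · have hone : (Matrix.of fun i j => coframe J i (J.emb j)) = 1 := by
      ext i j
      simp [coframe, Matrix.one_apply, Pi.single_apply, eq_comm]
    rw [hone, Matrix.det_one, mul_one]
  · intro I _ hI
    obtain ⟨a, ha⟩ := Idx.exists_emb_notMem hI
    rw [Matrix.det_eq_zero_of_row_eq_zero a fun b => ?_, mul_zero]
    refine Pi.single_eq_of_ne (fun h => ha ?_) _
    exact h ▸ I.emb_mem b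
  · simp

theorem pairing_eq_of_forall_coframe {w : MultiVec n m} {f : (Fin n → ℝ) [⋀^Fin m]→ₗ[ℝ] ℝ}
    (h : ∀ I, w I = f (coframe I)) : pairing w = f := by
  rw [funext h, pairing_apply_coframe]

theorem pairing_smul (c : ℝ) (w : MultiVec n m) : pairing (c • w) = c • pairing w :=
  pairing_eq_of_forall_coframe fun I => by simp [pairing_coframe]

theorem extPow_smul (A : Matrix (Fin n) (Fin n) ℝ) (c : ℝ) (w : MultiVec n m) :
    extPow n m A (c • w) = c • extPow n m A w := by
  funext J
  simp [extPow_eq_pairing, pairing_smul]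

theorem pairing_extPow (A : Matrix (Fin n) (Fin n) ℝ) (w : MultiVec n m) :
    pairing (extPow n m A w) = (pairing w).compLinearMap A.vecMulLinear :=
  pairing_eq_of_forall_coframe fun I => by
    simp only [extPow_eq_pairing, AlternatingMap.compLinearMap_apply, Matrix.vecMulLinear_apply,
      coframe, Matrix.single_one_vecMul, Matrix.row_def]

theorem extPow_mul (A B : Matrix (Fin n) (Fin n) ℝ) (w : MultiVec n m) :
    extPow n m (A * B) w = extPow n m A (extPow n m B w) := by
  funext J
  simp only [extPow_eq_pairing, pairing_extPow, AlternatingMap.compLinearMap_apply,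
    Matrix.vecMulLinear_apply, Matrix.mul_apply_eq_vecMul]

end Multivectors

section Contraction

variable {n q r m : ℕ}

/-- The alternating map `v ↦ f (u₁, …, u_r, v₁, …, v_m)` obtained by fixing the first `r` arguments
of `f`. -/
def fixLeft {R M N : Type*} [CommSemiring R] [AddCommMonoid M] [Module R M] [AddCommMonoid N]
    [Module R N] (f : M [⋀^Fin (r + m)]→ₗ[R] N) (u : Fin r → M) : M [⋀^Fin m]→ₗ[R] N where
  __ := (f.toMultilinearMap.domDomCongr finSumFinEquiv.symm).currySum u
  map_eq_zero_of_eq' v i j hv hij := by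
    refine f.map_eq_zero_of_eq _ (i := Fin.natAdd r i) (j := Fin.natAdd r j) ?_ (by simpa using hij)
    simpa using hv

theorem fixLeft_apply {R M N : Type*} [CommSemiring R] [AddCommMonoid M] [Module R M]
    [AddCommMonoid N] [Module R N] (f : M [⋀^Fin (r + m)]→ₗ[R] N) (u : Fin r → M)
    (v : Fin m → M) : fixLeft f u v = f (Fin.append u v) := by
  refine congrArg f (funext fun i => ?_)
  refine Fin.addCases (fun i => ?_) (fun i => ?_) i <;> simp

theorem sign_eq_neg_one_pow_card_inversions (σ : Equiv.Perm (Fin n)) :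
    (Equiv.Perm.sign σ : ℤ) =
      (-1) ^ (Finset.univ.filter fun p : Fin n × Fin n => p.1 < p.2 ∧ σ p.2 < σ p.1).card := by
  rw [Equiv.Perm.sign_eq_prod_prod_Ioi, ← Finset.prod_const]
  push_cast
  rw [Finset.prod_filter, ← Finset.univ_product_univ, Finset.prod_product]
  refine Finset.prod_congr rfl fun i _ => ?_
  rw [← Finset.filter_lt_eq_Ioi, Finset.prod_filter]
  refine Finset.prod_congr rfl fun j _ => ?_
  rcases lt_trichotomy i j with h | h | h
  · rcases (σ.injective.ne h.ne).lt_or_gt with h' | h' <;> simp [h, h', h'.not_gt]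
  · simp [h]
  · simp [h.not_gt]

theorem exists_perm_emb_eq {u : Fin m → Fin n} (hu : Function.Injective u) (T : Idx n m)
    (huT : ∀ i, u i ∈ T.1) : ∃ σ : Equiv.Perm (Fin m), ∀ i, T.emb (σ i) = u i := by
  choose σ hσ using fun i => Idx.exists_emb_eq (huT i)
  have hinj : Function.Injective σ := fun i j hij => hu (by rw [← hσ, hij, hσ])
  exact ⟨Equiv.ofBijective σ (Finite.injective_iff_bijective.1 hinj), hσ⟩

theorem append_emb_injective_iff {S : Idx n r} {K : Idx n m} :
    Function.Injective (Fin.append S.emb K.emb) ↔ Disjoint S.1 K.1 := by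
  rw [Fin.append_injective_iff]
  refine ⟨fun h => Finset.disjoint_left.2 fun j hS hK => ?_, fun h => ⟨S.emb.injective,
    K.emb.injective, fun a b => Finset.disjoint_iff_ne.1 h _ (S.emb_mem a) _ (K.emb_mem b)⟩⟩
  obtain ⟨⟨a, rfl⟩, b, hb⟩ := And.intro (Idx.exists_emb_eq hS) (Idx.exists_emb_eq hK)
  exact h.2.2 a b hb.symm

theorem append_emb_inversion_iff (S : Idx n r) (K : Idx n m) (s t : Fin n) :
    (∃ a b, a < b ∧ Fin.append S.emb K.emb b < Fin.append S.emb K.emb a ∧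
        Fin.append S.emb K.emb a = s ∧ Fin.append S.emb K.emb b = t) ↔
      s ∈ S.1 ∧ t ∈ K.1 ∧ t < s := by
  constructor
  · rintro ⟨a, b, hab, hlt, rfl, rfl⟩
    revert hab hlt
    refine Fin.addCases (fun a => ?_) (fun a => ?_) a <;>
      refine Fin.addCases (fun b => ?_) (fun b => ?_) b <;> intro hab hlt
    · simp only [Fin.append_left, OrderEmbedding.lt_iff_lt] at hlt
      exact absurd hab hlt.not_gt
    · simp only [Fin.append_left, Fin.append_right] at hlt ⊢
      exact ⟨S.emb_mem a, K.emb_mem b, hlt⟩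
    · exact absurd hab (b.2.trans_le (Nat.le_add_right r a)).not_gt
    · simp only [Fin.append_right, OrderEmbedding.lt_iff_lt] at hlt
      exact absurd ((Fin.natAdd_lt_natAdd_iff r).1 hab) hlt.not_gt
  · rintro ⟨hs, ht, hts⟩
    obtain ⟨⟨a, rfl⟩, b, rfl⟩ := And.intro (Idx.exists_emb_eq hs) (Idx.exists_emb_eq ht)
    have hab : Fin.castAdd m a < Fin.natAdd r b := a.2.trans_le (Nat.le_add_right r b)
    exact ⟨_, _, hab, by simpa using hts, by simp⟩

theorem shufSign_eq_sign {S : Idx n r} {K : Idx n m} {T : Idx n (r + m)} (h : Disjoint S.1 K.1)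
    (σ : Equiv.Perm (Fin (r + m))) (hσ : ∀ i, T.emb (σ i) = Fin.append S.emb K.emb i) :
    shufSign S.1 K.1 = (Equiv.Perm.sign σ : ℤ) := by
  have hinj := append_emb_injective_iff.2 h
  have hlt : ∀ a b, σ a < σ b ↔ Fin.append S.emb K.emb a < Fin.append S.emb K.emb b := fun a b => by
    rw [← hσ, ← hσ, T.emb.lt_iff_lt]
  rw [sign_eq_neg_one_pow_card_inversions, shufSign, Int.cast_pow, Int.cast_neg, Int.cast_one,
    ← Finset.card_image_of_injective _ (hinj.prodMap hinj)]
  congr 2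
  ext ⟨s, t⟩
  simpa [hlt, and_assoc] using (append_emb_inversion_iff S K s t).symm

theorem append_coframe (S : Idx n r) (K : Idx n m) :
    Fin.append (coframe S) (coframe K) = fun i => Pi.single (Fin.append S.emb K.emb i) 1 := by
  funext i
  refine Fin.addCases (fun i => ?_) (fun i => ?_) i <;> simp [coframe]

theorem contr_eq_pairing (S : Idx n r) (w : MultiVec n (r + m)) (K : Idx n m) :
    contr n (r + m) m S.1 w K = pairing w (Fin.append (coframe S) (coframe K)) := by
  rw [append_coframe]
  by_cases hd : Disjoint S.1 K.1
  · let T : Idx n (r + m) := ⟨S.1 ∪ K.1, by rw [Finset.card_union_of_disjoint hd, S.2, K.2]⟩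
    obtain ⟨σ, hσ⟩ := exists_perm_emb_eq (append_emb_injective_iff.2 hd) T fun i => by
      refine Fin.addCases (fun i => ?_) (fun i => ?_) i
      · simp only [Fin.append_left, T, Finset.mem_union, S.emb_mem, true_or]
      · simp only [Fin.append_right, T, Finset.mem_union, K.emb_mem, or_true]
    rw [contr, dif_pos ⟨hd, T.2⟩, shufSign_eq_sign hd σ hσ, ← pairing_coframe w T]
    simp only [← hσ]
    change _ = pairing w (coframe T ∘ σ)
    rw [AlternatingMap.map_perm, Units.smul_def, zsmul_eq_mul]
  · rw [contr, dif_neg fun h => hd h.1, AlternatingMap.map_eq_zero_of_not_injective]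
    exact fun hinj => hd (append_emb_injective_iff.1 fun i j hij => hinj (by simp only [hij]))

theorem pairing_contr (S : Idx n r) (w : MultiVec n (r + m)) :
    pairing (contr n (r + m) m S.1 w) = fixLeft (pairing w) (coframe S) :=
  pairing_eq_of_forall_coframe fun K => by rw [contr_eq_pairing, fixLeft_apply]

/-- Contraction with `e*_S` as a continuous linear map in the multivector. -/
noncomputable def contrL (n q m : ℕ) (S : Finset (Fin n)) : MultiVec n q →L[ℝ] MultiVec n m :=
  LinearMap.toContinuousLinearMap
    { toFun := contr n q m S
      map_add' := fun v w => by
        funext K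
        simp only [contr, Pi.add_apply]
        split_ifs <;> ring
      map_smul' := fun c w => by
        funext K
        simp only [contr, Pi.smul_apply, smul_eq_mul, RingHom.id_apply]
        split_ifs <;> ring }

theorem contrL_apply (n q m : ℕ) (S : Finset (Fin n)) (w : MultiVec n q) :
    contrL n q m S w = contr n q m S w := rfl

theorem fderiv_contr {P : (Fin n → ℝ) → MultiVec n q} {x : Fin n → ℝ}
    (hP : DifferentiableAt ℝ P x) (m : ℕ) (S : Finset (Fin n)) (v : Fin n → ℝ) :
    fderiv ℝ (fun y => contr n q m S (P y)) x v = contr n q m S (fderiv ℝ P x v) :=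
  congrArg (· v) ((contrL n q m S).hasFDerivAt.comp x hP.hasFDerivAt).fderiv

end Contraction

section StandardMultivector

variable {n m : ℕ}

/-- The multi-index `1 < 2 < ⋯ < m`. -/
def stdIdx (h : m ≤ n) : Idx n m :=
  ⟨Finset.univ.filter fun i : Fin n => (i : ℕ) < m, by rw [Fin.card_filter_val_lt]; omega⟩

theorem mem_stdIdx {h : m ≤ n} {i : Fin n} : i ∈ (stdIdx h).1 ↔ (i : ℕ) < m := by
  simp [stdIdx]

theorem stdIdx_emb (h : m ≤ n) (i : Fin m) : (stdIdx h).emb i = Fin.castLE h i :=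
  congrFun (Finset.orderEmbOfFin_unique (stdIdx h).2 (f := Fin.castLE h)
    (fun i => mem_stdIdx.2 i.2) (Fin.strictMono_castLE h)).symm i

theorem stdVec_apply (h : m ≤ n) (J : Idx n m) :
    stdVec n m J = if J = stdIdx h then 1 else 0 := by
  simp only [stdVec, stdIdx, Subtype.ext_iff]

theorem pairing_stdVec (h : m ≤ n) (α : Fin m → Fin n → ℝ) :
    pairing (stdVec n m) α = (Matrix.of fun i j => α i (Fin.castLE h j)).det := by
  rw [pairing_apply, Finset.sum_eq_single (stdIdx h)]
  · simp only [stdVec_apply h, if_pos, one_mul, stdIdx_emb]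
  · intro I _ hI
    rw [stdVec_apply h, if_neg hI, zero_mul]
  · simp

theorem pairing_stdVec_eq_zero (h : m ≤ n) {α : Fin m → Fin n → ℝ} {i : Fin m} {j : Fin n}
    (hj : m ≤ j) (hi : α i = Pi.single j 1) : pairing (stdVec n m) α = 0 := by
  rw [pairing_stdVec h]
  refine Matrix.det_eq_zero_of_row_eq_zero i fun l => ?_
  rw [Matrix.of_apply, hi, Pi.single_eq_of_ne]
  rintro rfl
  exact hj.not_gt l.2

theorem det_eq_pairing_stdVec (h : m ≤ n) {C : Matrix (Fin n) (Fin n) ℝ}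
    (hC : ∀ i : Fin n, m ≤ i → C i = Pi.single i 1) :
    C.det = pairing (stdVec n m) fun i => C (Fin.castLE h i) := by
  rw [Matrix.twoBlockTriangular_det C fun i : Fin n => (i : ℕ) < m]
  · have hone : C.toSquareBlockProp (fun i : Fin n => ¬ (i : ℕ) < m) = 1 := by
      ext i j
      rw [Matrix.toSquareBlockProp, Matrix.toBlock_apply, hC i (not_lt.1 i.2)]
      simp [Matrix.one_apply, Pi.single_apply, Subtype.ext_iff, eq_comm]
    rw [hone, Matrix.det_one, mul_one, pairing_stdVec h,
      ← Matrix.det_submatrix_equiv_self (Fin.castLEquiv h)]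
    rfl
  · intro i hi j hj
    rw [hC i (not_lt.1 hi), Pi.single_eq_of_ne]
    exact fun hij => hi (hij ▸ hj)

theorem extPow_eq_smul_stdVec (h : m ≤ n) {A : Matrix (Fin n) (Fin n) ℝ} {w : MultiVec n m}
    (hA : ∀ (J : Idx n m) (a : Fin m), m ≤ J.emb a → pairing w (fun i => A (J.emb i)) = 0) :
    extPow n m A w = pairing w (fun i => A (Fin.castLE h i)) • stdVec n m := by
  funext J
  rw [extPow_eq_pairing, Pi.smul_apply, stdVec_apply h, smul_eq_mul]
  split_ifs with hJ
  · simp only [hJ, stdIdx_emb, mul_one]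
  · obtain ⟨a, ha⟩ := Idx.exists_emb_notMem (Ne.symm hJ)
    rw [hA J a (not_lt.1 (mt mem_stdIdx.2 ha)), mul_zero]

theorem extPow_stdVec (h : m ≤ n) {C : Matrix (Fin n) (Fin n) ℝ}
    (hC : ∀ i : Fin n, m ≤ i → C i = Pi.single i 1) :
    extPow n m C (stdVec n m) = C.det • stdVec n m := by
  rw [extPow_eq_smul_stdVec h, det_eq_pairing_stdVec h hC]
  exact fun J a ha => pairing_stdVec_eq_zero h ha (hC _ ha)

section Straightened

variable {A : Matrix (Fin n) (Fin n) ℝ} {w : MultiVec n m}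

theorem pairing_eq_pairing_stdVec (hA : IsUnit A.det) (hw : extPow n m A w = stdVec n m)
    (α : Fin m → Fin n → ℝ) : pairing w α = pairing (stdVec n m) fun i => A⁻¹.vecMul (α i) := by
  rw [← hw, pairing_extPow]
  simp [Matrix.vecMul_vecMul, Matrix.nonsing_inv_mul _ hA]

theorem row_vecMul_inv (hA : IsUnit A.det) (j : Fin n) :
    Matrix.vecMul (A j) A⁻¹ = Pi.single j 1 := by
  rw [← Matrix.mul_apply_eq_vecMul, Matrix.mul_nonsing_inv _ hA]
  exact funext fun _ => Matrix.one_eq_pi_single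

theorem pairing_eq_zero_of_eq_row (h : m ≤ n) (hA : IsUnit A.det)
    (hw : extPow n m A w = stdVec n m) {α : Fin m → Fin n → ℝ} {i : Fin m} {j : Fin n}
    (hj : m ≤ j) (hi : α i = A j) : pairing w α = 0 := by
  rw [pairing_eq_pairing_stdVec hA hw]
  exact pairing_stdVec_eq_zero h hj (i := i) (by rw [hi, row_vecMul_inv hA])

theorem det_mul_inv_eq_pairing (h : m ≤ n) (hA : IsUnit A.det) (hw : extPow n m A w = stdVec n m)
    {F : Matrix (Fin n) (Fin n) ℝ} (hF : ∀ i : Fin n, m ≤ i → F i = A i) :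
    (F * A⁻¹).det = pairing w fun i => F (Fin.castLE h i) := by
  rw [pairing_eq_pairing_stdVec hA hw, det_eq_pairing_stdVec h fun i hi => ?_]
  · simp only [Matrix.mul_apply_eq_vecMul]
  · rw [Matrix.mul_apply_eq_vecMul, hF i hi, row_vecMul_inv hA]

end Straightened

end StandardMultivector

section AdaptedFrame

variable {n r m : ℕ}

/-- Replaces the first `r` entries of a sequence of length `n`. -/
def replaceInit {α : Type*} (a : Fin r → α) (b : Fin n → α) : Fin n → α :=
  fun i => if h : (i : ℕ) < r then a ⟨i, h⟩ else b i

theorem replaceInit_of_lt {α : Type*} {a : Fin r → α} {b : Fin n → α} {i : Fin n}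
    (h : (i : ℕ) < r) : replaceInit a b i = a ⟨i, h⟩ := dif_pos h

theorem replaceInit_of_le {α : Type*} {a : Fin r → α} {b : Fin n → α} {i : Fin n} (h : r ≤ i) :
    replaceInit a b i = b i := dif_neg h.not_gt

theorem map_append_swap {R M N : Type*} [CommSemiring R] [AddCommMonoid M] [Module R M]
    [AddCommGroup N] [Module R N] (f : M [⋀^Fin (r + m)]→ₗ[R] N) (u : Fin r → M) (v : Fin m → M) :
    f (Fin.append v u ∘ Fin.cast (add_comm r m)) =
      Equiv.Perm.sign ((finCongr (add_comm r m)).trans finAddFlip) • f (Fin.append u v) := by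
  rw [← f.map_perm]
  refine congrArg f (funext fun i => ?_)
  obtain ⟨i, rfl⟩ := (finCongr (add_comm m r)).surjective i
  refine Fin.addCases (fun i => ?_) (fun i => ?_) i <;> simp [Function.comp_def]

/-- The matrix `A` with its first `r + m` rows replaced by the basis covectors
`e*_{k₁}, …, e*_{k_m}, e*_{s₁}, …, e*_{s_r}`: the Jacobian matrix of the coordinates
`(x_K, x_S, φ_{r+m+1}, …, φ_n)` where `A` is that of `φ`. -/
def adaptedFrame (A : Matrix (Fin n) (Fin n) ℝ) (S : Idx n r) (K : Idx n m) :
    Matrix (Fin n) (Fin n) ℝ :=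
  Matrix.of (replaceInit (Fin.append (coframe K) (coframe S) ∘ Fin.cast (add_comm r m)) A.row)

variable {A : Matrix (Fin n) (Fin n) ℝ} {w : MultiVec n (r + m)} {S : Idx n r} {K : Idx n m}

theorem adaptedFrame_castLE (h : r + m ≤ n) (i : Fin (r + m)) :
    adaptedFrame A S K (Fin.castLE h i) =
      Fin.append (coframe K) (coframe S) (Fin.cast (add_comm r m) i) :=
  replaceInit_of_lt (i := Fin.castLE h i) i.2

theorem adaptedFrame_of_le {i : Fin n} (h : r + m ≤ i) : adaptedFrame A S K i = A i :=
  replaceInit_of_le h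

theorem adaptedFrame_first (h : r + m ≤ n) (a : Fin m) :
    adaptedFrame A S K (Fin.castLE h (Fin.cast (add_comm m r) (Fin.castAdd r a))) = coframe K a :=
  (adaptedFrame_castLE h _).trans (Fin.append_left (coframe K) (coframe S) a)

theorem exists_adaptedFrame_eq_coframe (h : r + m ≤ n) {i : Fin n} (hm : m ≤ i)
    (hi : (i : ℕ) < r + m) : ∃ b, adaptedFrame A S K i = coframe S b := by
  refine ⟨⟨i - m, by omega⟩, ?_⟩
  rw [← Fin.append_right (coframe K) (coframe S)]
  refine (adaptedFrame_castLE h ⟨i, hi⟩).trans (congrArg _ (Fin.ext ?_))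
  simp [hm]

theorem extPow_adaptedFrame_contr (h : r + m ≤ n) (hA : IsUnit A.det)
    (hw : extPow n (r + m) A w = stdVec n (r + m)) (S : Idx n r) (K : Idx n m) :
    extPow n m (adaptedFrame A S K) (contr n (r + m) m S.1 w) =
      contr n (r + m) m S.1 w K • stdVec n m := by
  rw [extPow_eq_smul_stdVec (by omega), ← pairing_coframe (contr _ _ _ _ _) K]
  · exact congrArg (pairing _ · • _) (funext (adaptedFrame_first h))
  · intro J a ha
    rw [pairing_contr, fixLeft_apply]
    rcases lt_or_ge (J.emb a : ℕ) (r + m) with hlt | hle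
    · obtain ⟨b, hb⟩ := exists_adaptedFrame_eq_coframe (A := A) (S := S) (K := K) h ha hlt
      refine (pairing w).map_eq_zero_of_eq _ (i := Fin.castAdd m b) (j := Fin.natAdd r a) ?_ ?_
      · simp only [Fin.append_left, Fin.append_right, hb]
      · exact Fin.ne_of_val_ne (b.2.trans_le (Nat.le_add_right r a)).ne
    · refine pairing_eq_zero_of_eq_row h hA hw (i := Fin.natAdd r a) hle ?_
      rw [Fin.append_right, adaptedFrame_of_le hle]

theorem det_adaptedFrame_ne_zero (h : r + m ≤ n) (hA : IsUnit A.det)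
    (hw : extPow n (r + m) A w = stdVec n (r + m)) (hK : contr n (r + m) m S.1 w K ≠ 0) :
    (adaptedFrame A S K).det ≠ 0 := by
  have hdet : (adaptedFrame A S K * A⁻¹).det =
      pairing w (Fin.append (coframe K) (coframe S) ∘ Fin.cast (add_comm r m)) := by
    rw [det_mul_inv_eq_pairing h hA hw fun i => adaptedFrame_of_le]
    exact congrArg _ (funext (adaptedFrame_castLE h))
  rw [map_append_swap, ← contr_eq_pairing, Matrix.det_mul] at hdet
  refine left_ne_zero_of_mul (hdet.trans_ne ?_)
  rwa [Units.smul_def, smul_ne_zero_iff_right (Units.ne_zero _)]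

end AdaptedFrame

section DirectionalPrimitive

variable {E F : Type*} [NormedAddCommGroup E] [NormedSpace ℝ E] [NormedAddCommGroup F]
  [NormedSpace ℝ F]

theorem exists_contDiff_hasCompactSupport_eventuallyEq [FiniteDimensional ℝ E] {f : E → F}
    {V : Set E} {z : E} (hV : V ∈ nhds z) (hf : ∀ x ∈ V, ContDiffAt ℝ ∞ f x) :
    ∃ g : E → F, ContDiff ℝ ∞ g ∧ HasCompactSupport g ∧ g =ᶠ[nhds z] f := by
  obtain ⟨ε, hε, hsub⟩ := Metric.nhds_basis_closedBall.mem_iff.1 hV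
  let b : ContDiffBump z := ⟨ε / 2, ε, by positivity, by linarith⟩
  refine ⟨fun x => b x • f x, contMDiff_iff_contDiff.1 <| contMDiff_of_tsupport fun x hx => ?_,
    b.hasCompactSupport.smul_right, ?_⟩
  · have hx : x ∈ tsupport b := tsupport_smul_subset_left _ _ hx
    exact (b.contDiff.contDiffAt.smul (hf x (hsub (b.tsupport_eq ▸ hx)))).contMDiffAt
  · filter_upwards [b.eventuallyEq_one] with x hx
    simp [hx]

open MeasureTheory in
theorem contDiff_integral_sub_smul {g : E → F} (hg : ContDiff ℝ ∞ g) (hgc : HasCompactSupport g)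
    (v : E) {R : ℝ} (hR : 0 ≤ R) : ContDiff ℝ ∞ fun x => ∫ t in 0..R, g (x - t • v) := by
  borelize E
  let μ : Measure E := (volume.restrict (Set.Ioc 0 R)).map fun t => t • v
  have hconv : (fun x => ∫ t in 0..R, g (x - t • v)) =
      convolution (fun _ => (1 : ℝ)) g (ContinuousLinearMap.lsmul ℝ ℝ) μ := by
    funext x
    rw [intervalIntegral.integral_of_le hR, convolution_def, integral_map]
    · simp
    · fun_prop
    · have hgx : Continuous fun y => g (x - y) := hg.continuous.comp (by fun_prop)
      have hgxc : HasCompactSupport fun y => g (x - y) :=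
        hgc.comp_homeomorph (Homeomorph.subLeft x)
      exact (hgx.stronglyMeasurable_of_hasCompactSupport
        hgxc).aestronglyMeasurable.const_smul (1 : ℝ)
  rw [hconv]
  exact hgc.contDiff_convolution_right _ (integrable_const _).locallyIntegrable hg

theorem fderiv_integral_sub_smul [CompleteSpace F] {g : E → F} (hg : Continuous g) (v x : E) {R : ℝ}
    (hd : DifferentiableAt ℝ (fun x => ∫ t in 0..R, g (x - t • v)) x) :
    fderiv ℝ (fun x => ∫ t in 0..R, g (x - t • v)) x v = g x - g (x - R • v) := by
  let G : ℝ → F := fun s => ∫ u in 0..s, g (x + u • v)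
  have hG : ∀ s, HasDerivAt G (g (x + s • v)) s := fun s =>
    (by fun_prop : Continuous fun u : ℝ => g (x + u • v)).integral_hasStrictDerivAt 0 s
      |>.hasDerivAt
  have hline : ∀ s : ℝ, ∫ t in 0..R, g (x + s • v - t • v) = G s - G (s - R) := fun s => by
    calc ∫ t in 0..R, g (x + s • v - t • v) = ∫ t in 0..R, g (x + (s - t) • v) := by
          simp only [sub_smul, add_sub_assoc]
      _ = ∫ u in (s - R)..s, g (x + u • v) := by
          rw [intervalIntegral.integral_comp_sub_left (fun u => g (x + u • v)), sub_zero]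
      _ = G s - G (s - R) := by
          refine (intervalIntegral.integral_interval_sub_left ?_ ?_).symm <;>
            exact Continuous.intervalIntegrable (by fun_prop) _ _
  have hderiv : HasDerivAt (fun s : ℝ => ∫ t in 0..R, g (x + s • v - t • v))
      (g x - g (x - R • v)) 0 := by
    simp only [hline]
    simpa [sub_eq_add_neg] using (hG 0).fun_sub ((hG (0 - R)).comp_sub_const 0 R)
  rw [← hd.lineDeriv_eq_fderiv]
  exact HasLineDerivAt.lineDeriv hderiv

theorem exists_contDiff_fderiv_apply_eventuallyEq [FiniteDimensional ℝ E] [CompleteSpace F]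
    {f : E → F} {V : Set E} {z : E} (hV : V ∈ nhds z) (hf : ∀ x ∈ V, ContDiffAt ℝ ∞ f x) {v : E}
    (hv : v ≠ 0) : ∃ H : E → F, ContDiff ℝ ∞ H ∧ ∀ᶠ x in nhds z, fderiv ℝ H x v = f x := by
  obtain ⟨g, hg, hgc, hgf⟩ := exists_contDiff_hasCompactSupport_eventuallyEq hV hf
  have hout : ∀ᶠ R : ℝ in Filter.atTop, z - R • v ∉ tsupport g :=
    ((Homeomorph.subLeft z).isClosedEmbedding.comp
      (isClosedEmbedding_smul_left hv)).tendsto_cocompact.mono_left atTop_le_cocompact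
      |>.eventually hgc.isCompact.compl_mem_cocompact
  obtain ⟨R, hzR, hR⟩ := (hout.and (Filter.eventually_ge_atTop 0)).exists
  have hH := contDiff_integral_sub_smul hg hgc v hR
  refine ⟨_, hH, ?_⟩
  have hvanish : ∀ᶠ x in nhds z, x - R • v ∉ tsupport g :=
    (by fun_prop : Continuous fun x => x - R • v).continuousAt.eventually
      ((isClosed_tsupport g).isOpen_compl.mem_nhds hzR)
  filter_upwards [hvanish, hgf] with x hx hgfx
  rw [fderiv_integral_sub_smul hg.continuous v x (hH.differentiable (by simp) x),
    image_eq_zero_of_notMem_tsupport hx, sub_zero, hgfx]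

end DirectionalPrimitive

section Charts

variable {n : ℕ}

theorem jac_eq_toMatrix' (φ : (Fin n → ℝ) → Fin n → ℝ) (x : Fin n → ℝ) :
    jac φ x = LinearMap.toMatrix' (fderiv ℝ φ x : (Fin n → ℝ) →ₗ[ℝ] Fin n → ℝ) := by
  ext i j
  simp [jac, LinearMap.toMatrix'_apply]

theorem det_jac (φ : (Fin n → ℝ) → Fin n → ℝ) (x : Fin n → ℝ) :
    (jac φ x).det = (fderiv ℝ φ x).det := by
  rw [jac_eq_toMatrix', LinearMap.det_toMatrix', ContinuousLinearMap.det]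

theorem jac_comp {f g : (Fin n → ℝ) → Fin n → ℝ} {x : Fin n → ℝ}
    (hf : DifferentiableAt ℝ f (g x)) (hg : DifferentiableAt ℝ g x) :
    jac (f ∘ g) x = jac f (g x) * jac g x := by
  rw [jac_eq_toMatrix', fderiv_comp x hf hg, ContinuousLinearMap.toLinearMap_comp,
    LinearMap.toMatrix'_comp, ← jac_eq_toMatrix', ← jac_eq_toMatrix']

theorem jac_apply {f : (Fin n → ℝ) → Fin n → ℝ} {x : Fin n → ℝ} (hf : DifferentiableAt ℝ f x)
    (i j : Fin n) : jac f x i j = fderiv ℝ (fun y => f y i) x (Pi.single j 1) := by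
  rw [(hasFDerivAt_pi'.mp hf.hasFDerivAt i).fderiv]
  rfl

theorem jac_row_of_coord {f : (Fin n → ℝ) → Fin n → ℝ} {x : Fin n → ℝ}
    (hf : DifferentiableAt ℝ f x) {i l : Fin n} (h : ∀ y, f y i = y l) :
    jac f x i = Pi.single l 1 := by
  ext j
  simp only [jac_apply hf, h, (hasFDerivAt_apply l x).fderiv, ContinuousLinearMap.proj_apply,
    Pi.single_apply, eq_comm]

theorem IsSmoothDiffeoOn.differentiableAt {φ : (Fin n → ℝ) → Fin n → ℝ} {W : Set (Fin n → ℝ)}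
    (h : IsSmoothDiffeoOn φ W) {x : Fin n → ℝ} (hx : x ∈ W) : DifferentiableAt ℝ φ x :=
  (h.2.2.1.contDiffAt (h.1.mem_nhds hx)).differentiableAt (by simp)

theorem IsSmoothDiffeoOn.isUnit_det_jac {φ : (Fin n → ℝ) → Fin n → ℝ} {W : Set (Fin n → ℝ)}
    (h : IsSmoothDiffeoOn φ W) {x : Fin n → ℝ} (hx : x ∈ W) : IsUnit (jac φ x).det := by
  have hφ := h.differentiableAt hx
  obtain ⟨hW, hφW, -, ψ, hψ, hleft, -⟩ := h
  have hψ : DifferentiableAt ℝ ψ (φ x) :=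
    (hψ.contDiffAt (hφW.mem_nhds (Set.mem_image_of_mem φ hx))).differentiableAt (by simp)
  have hid : jac (ψ ∘ φ) x = 1 := by
    have hev : ψ ∘ φ =ᶠ[nhds x] id := Filter.mem_of_superset (hW.mem_nhds hx) hleft
    rw [jac_eq_toMatrix', hev.fderiv_eq, fderiv_id]
    exact LinearMap.toMatrix'_id
  rw [jac_comp hψ hφ] at hid
  exact Matrix.isUnit_det_of_left_inverse hid

theorem exists_isSmoothDiffeoOn {Φ : (Fin n → ℝ) → Fin n → ℝ} {V : Set (Fin n → ℝ)}
    (hV : IsOpen V) (hΦ : ContDiffOn ℝ ∞ Φ V) {p : Fin n → ℝ} (hp : p ∈ V)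
    (hdet : (jac Φ p).det ≠ 0) : ∃ W ⊆ V, p ∈ W ∧ IsSmoothDiffeoOn Φ W := by
  have hat : ∀ x ∈ V, ContDiffAt ℝ ∞ Φ x := fun x hx => hΦ.contDiffAt (hV.mem_nhds hx)
  have hder : ∀ x ∈ V, HasFDerivAt Φ (fderiv ℝ Φ x) x := fun x hx =>
    ((hat x hx).differentiableAt (by simp)).hasFDerivAt
  let invertible : Set ((Fin n → ℝ) →L[ℝ] Fin n → ℝ) :=
    Set.range ((↑) : ((Fin n → ℝ) ≃L[ℝ] Fin n → ℝ) → (Fin n → ℝ) →L[ℝ] Fin n → ℝ)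
  obtain ⟨L, hL⟩ : fderiv ℝ Φ p ∈ invertible :=
    ⟨(fderiv ℝ Φ p).toContinuousLinearEquivOfDetNeZero (by rwa [← det_jac]), by ext; simp⟩
  let e := (hat p hp).toOpenPartialHomeomorph Φ (f' := L) (by rw [hL]; exact hder p hp) (by simp)
  have hV' : IsOpen (V ∩ fderiv ℝ Φ ⁻¹' invertible) :=
    (hΦ.continuousOn_fderiv_of_isOpen hV (by simp)).isOpen_inter_preimage hV
      ContinuousLinearEquiv.isOpen
  have hW := e.open_source.inter hV'
  refine ⟨e.source ∩ (V ∩ fderiv ℝ Φ ⁻¹' invertible), fun x hx => hx.2.1,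
    ⟨(hat p hp).mem_toOpenPartialHomeomorph_source _ _, hp, L, hL⟩, hW,
    e.isOpen_image_of_subset_source hW Set.inter_subset_left, hΦ.mono fun x hx => hx.2.1,
    e.symm, ?_, fun x hx => e.left_inv hx.1, ?_⟩
  · rintro _ ⟨x, ⟨hxe, hxV, L', hL'⟩, rfl⟩
    refine (e.contDiffAt_symm (f₀' := L') (e.map_source hxe) ?_ ?_).contDiffWithinAt <;>
      rw [e.left_inv hxe]
    · exact hL' ▸ hder x hxV
    · exact hat x hxV
  · rintro _ ⟨x, hx, rfl⟩
    exact e.right_inv (e.map_source hx.1)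

end Charts

section Rectification

variable {n m : ℕ}

theorem exists_contDiff_jac_rescales (hm : 0 < m) (h : m ≤ n) {f : (Fin n → ℝ) → ℝ}
    {V : Set (Fin n → ℝ)} {z : Fin n → ℝ} (hV : V ∈ nhds z) (hf : ∀ x ∈ V, ContDiffAt ℝ ∞ f x) :
    ∃ T : (Fin n → ℝ) → Fin n → ℝ, ContDiff ℝ ∞ T ∧ ∀ᶠ x in nhds z, (jac T x).det = f x ∧
      extPow n m (jac T x) (stdVec n m) = f x • stdVec n m := by
  let a : Fin n := ⟨0, hm.trans_le h⟩
  obtain ⟨H, hH, hHf⟩ :=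
    exists_contDiff_fderiv_apply_eventuallyEq hV hf (v := Pi.single a 1) (by simp)
  let T : (Fin n → ℝ) → Fin n → ℝ := fun x => Function.update x a (H x)
  have hT : ContDiff ℝ ∞ T := contDiff_pi.2 fun i => by
    rcases eq_or_ne i a with rfl | hi
    · simpa only [T, Function.update_self] using hH
    · simpa only [T, Function.update_of_ne hi] using contDiff_apply ℝ ℝ i
  refine ⟨T, hT, hHf.mono fun x hx => ?_⟩
  have hTx : DifferentiableAt ℝ T x := hT.differentiable (by simp) x
  have hrow : ∀ i : Fin n, 1 ≤ (i : ℕ) → jac T x i = Pi.single i 1 := fun i hi =>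
    jac_row_of_coord hTx fun y => Function.update_of_ne (Fin.ne_of_gt hi) _ _
  have hdet : (jac T x).det = f x := by
    rw [det_eq_pairing_stdVec (hm.trans_le h) hrow, pairing_stdVec (hm.trans_le h),
      Matrix.det_unique, ← hx]
    exact (jac_apply hTx a a).trans (by simp only [T, Function.update_self])
  exact ⟨hdet, by rw [extPow_stdVec h fun i hi => hrow i (hm.trans_le hi), hdet]⟩

theorem IsSmoothDiffeoOn.exists_extPow_eq_stdVec (hm : 0 < m) (h : m ≤ n)
    {Y : (Fin n → ℝ) → Fin n → ℝ} {f : (Fin n → ℝ) → ℝ} {Q : (Fin n → ℝ) → MultiVec n m}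
    {V : Set (Fin n → ℝ)} (hY : IsSmoothDiffeoOn Y V) (hf : ContDiffOn ℝ ∞ f V)
    (hf0 : ∀ x ∈ V, f x ≠ 0) (hQ : ∀ x ∈ V, extPow n m (jac Y x) (Q x) = f x • stdVec n m)
    {p : Fin n → ℝ} (hp : p ∈ V) :
    ∃ W ⊆ V, p ∈ W ∧ ∃ φ, IsSmoothDiffeoOn φ W ∧
      ∀ x ∈ W, extPow n m (jac φ x) (Q x) = stdVec n m := by
  obtain ⟨hV, hYV, hYsmooth, ψ, hψ, hψY, -⟩ := id hY
  have hmaps : Set.MapsTo ψ (Y '' V) V := by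
    rintro _ ⟨x, hx, rfl⟩
    rwa [hψY x hx]
  have hinv : ContDiffOn ℝ ∞ (fun y => (f (ψ y))⁻¹) (Y '' V) :=
    (hf.comp hψ hmaps).inv fun y hy => hf0 _ (hmaps hy)
  obtain ⟨T, hT, hTY⟩ := exists_contDiff_jac_rescales hm h
    (hYV.mem_nhds (Set.mem_image_of_mem Y hp)) fun y hy => hinv.contDiffAt (hYV.mem_nhds hy)
  obtain ⟨W₁, hsub, hW₁, hpW₁⟩ := eventually_nhds_iff.1
    (((hY.differentiableAt hp).continuousAt.eventually hTY).and (hV.mem_nhds hp))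
  have hjac : ∀ x ∈ V, jac (T ∘ Y) x = jac T (Y x) * jac Y x := fun x hx =>
    jac_comp (hT.differentiable (by simp) _) (hY.differentiableAt hx)
  have hdet : (jac (T ∘ Y) p).det ≠ 0 := by
    rw [hjac p hp, Matrix.det_mul, (hsub p hpW₁).1.1, hψY p hp]
    exact mul_ne_zero (inv_ne_zero (hf0 p hp)) (hY.isUnit_det_jac hp).ne_zero
  obtain ⟨W, hWW₁, hpW, hφ⟩ := exists_isSmoothDiffeoOn hW₁
    (hT.comp_contDiffOn (hYsmooth.mono fun x hx => (hsub x hx).2)) hpW₁ hdet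
  refine ⟨W, fun x hx => (hsub x (hWW₁ hx)).2, hpW, _, hφ, fun x hx => ?_⟩
  obtain ⟨⟨-, hTstd⟩, hxV⟩ := hsub x (hWW₁ hx)
  rw [hjac x hxV, extPow_mul, hQ x hxV, extPow_smul, hTstd, hψY x hxV, smul_smul,
    mul_inv_cancel₀ (hf0 x hxV), one_smul]

end Rectification

section Slicing

variable {n r m : ℕ}

/-- The coordinates `(x_K, x_S, φ_{r+m+1}, …, φ_n)`, in which the contraction of a multivector
straightened by `φ` with the covector `e*_S` becomes a multiple of `e₁ ∧ ⋯ ∧ e_m`. -/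
def sliceChart (φ : (Fin n → ℝ) → Fin n → ℝ) (S : Idx n r) (K : Idx n m) (x : Fin n → ℝ) :
    Fin n → ℝ :=
  replaceInit (fun i => x (Fin.append K.emb S.emb (Fin.cast (add_comm r m) i))) (φ x)

variable {φ : (Fin n → ℝ) → Fin n → ℝ} {S : Idx n r} {K : Idx n m}

theorem contDiffOn_sliceChart {W : Set (Fin n → ℝ)} (hφ : ContDiffOn ℝ ∞ φ W) :
    ContDiffOn ℝ ∞ (sliceChart φ S K) W := by
  refine contDiffOn_pi.2 fun i => ?_
  rcases lt_or_ge (i : ℕ) (r + m) with hi | hi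
  · simpa only [sliceChart, replaceInit_of_lt hi] using (contDiff_apply ℝ ℝ _).contDiffOn
  · simpa only [sliceChart, replaceInit_of_le hi] using contDiffOn_pi.1 hφ i

theorem jac_sliceChart {x : Fin n → ℝ} (hφ : DifferentiableAt ℝ φ x)
    (hY : DifferentiableAt ℝ (sliceChart φ S K) x) :
    jac (sliceChart φ S K) x = adaptedFrame (jac φ x) S K := by
  refine funext fun i => ?_
  rcases lt_or_ge (i : ℕ) (r + m) with hi | hi
  · rw [jac_row_of_coord hY fun y => replaceInit_of_lt hi]
    refine Eq.trans ?_ (replaceInit_of_lt hi).symm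
    rw [append_coframe]
    rfl
  · rw [adaptedFrame_of_le hi]
    ext j
    simp only [jac_apply hY, jac_apply hφ, sliceChart, replaceInit_of_le hi]

theorem IsNambu.slice {P : (Fin n → ℝ) → MultiVec n (r + m)} {U : Set (Fin n → ℝ)}
    (hP : IsNambu n (r + m) P U) (hm : 0 < m) (h : r + m ≤ n) (S : Idx n r) :
    IsNambu n m (fun x => contr n (r + m) m S.1 (P x)) U := by
  have hsmooth : ContDiffOn ℝ ∞ (fun x => contr n (r + m) m S.1 (P x)) U :=
    (contrL n (r + m) m S.1).contDiff.comp_contDiffOn hP.1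
  refine ⟨hsmooth, fun p hp hne => ?_⟩
  obtain ⟨K, hK⟩ := Function.ne_iff.1 hne
  have hPp : P p ≠ 0 := fun h0 => hne (by simp only [h0, ← contrL_apply, map_zero])
  obtain ⟨W, hpW, hWU, φ, hφ, hstd⟩ := hP.2 p hp hPp
  let f : (Fin n → ℝ) → ℝ := fun x => contr n (r + m) m S.1 (P x) K
  have hf : ContDiffOn ℝ ∞ f W := contDiffOn_pi.1 (hsmooth.mono hWU) K
  have hY : ContDiffOn ℝ ∞ (sliceChart φ S K) W := contDiffOn_sliceChart hφ.2.2.1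
  have hjac : ∀ x ∈ W, jac (sliceChart φ S K) x = adaptedFrame (jac φ x) S K := fun x hx =>
    jac_sliceChart (hφ.differentiableAt hx)
      ((hY.contDiffAt (hφ.1.mem_nhds hx)).differentiableAt (by simp))
  have hdet : (jac (sliceChart φ S K) p).det ≠ 0 := by
    rw [hjac p hpW]
    exact det_adaptedFrame_ne_zero h (hφ.isUnit_det_jac hpW) (hstd p hpW) hK
  obtain ⟨V, hVsub, hpV, hYV⟩ := exists_isSmoothDiffeoOn
    (hf.continuousOn.isOpen_inter_preimage hφ.1 isOpen_compl_singleton)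
    (hY.mono Set.inter_subset_left) ⟨hpW, hK⟩ hdet
  obtain ⟨W', hW'V, hpW', hdiffeo⟩ := hYV.exists_extPow_eq_stdVec hm (by omega)
    (hf.mono fun x hx => (hVsub hx).1) (fun x hx => (hVsub hx).2) (fun x hx => by
      rw [hjac x (hVsub hx).1]
      exact extPow_adaptedFrame_contr h (hφ.isUnit_det_jac (hVsub hx).1) (hstd x (hVsub hx).1) S K)
    hpV
  exact ⟨W', hpW', fun x hx => hWU (hVsub (hW'V hx)).1, hdiffeo⟩

end Slicing

section LinearModel

variable {n q k : ℕ}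

theorem shufSign_of_forall_lt {S K : Finset (Fin n)} (h : ∀ s ∈ S, ∀ t ∈ K, t < s) :
    shufSign S K = (-1) ^ (S.card * K.card) := by
  rw [shufSign, Finset.filter_true_of_mem, Finset.card_product]
  intro p hp
  exact h _ (Finset.mem_product.1 hp).1 _ (Finset.mem_product.1 hp).2

theorem mem_sliceIdx {i : Fin n} : i ∈ sliceIdx n q k ↔ k ≤ (i : ℕ) ∧ (i : ℕ) < q + 1 := by
  simp [sliceIdx]

theorem card_sliceIdx (hn : q < n) : (sliceIdx n q k).card = q + 1 - k := by
  have hmap : (sliceIdx n q k).map Fin.valEmbedding = Finset.Ico k (q + 1) := by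
    ext i
    simp only [Finset.mem_map, mem_sliceIdx, Fin.valEmbedding_apply, Finset.mem_Ico]
    refine ⟨?_, fun hi => ⟨⟨i, by omega⟩, hi, rfl⟩⟩
    rintro ⟨j, hj, rfl⟩
    exact hj
  rw [← Finset.card_map, hmap, Nat.card_Ico]

theorem sliceIdx_union_eq_erase_iff (hkq : k ≤ q + 1) {J : Finset (Fin n)}
    (hd : Disjoint (sliceIdx n q k) J) (j : Fin n) :
    (j : ℕ) < q + 1 ∧ sliceIdx n q k ∪ J = (topIdx n q).erase j ↔
      (j : ℕ) < k ∧ J = (Finset.univ.filter fun i : Fin n => (i : ℕ) < k).erase j := by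
  have hsub : sliceIdx n q k ⊆ topIdx n q := fun i hi =>
    Finset.mem_filter.2 ⟨Finset.mem_univ i, (mem_sliceIdx.1 hi).2⟩
  have hsdiff : topIdx n q \ sliceIdx n q k =
      Finset.univ.filter fun i : Fin n => (i : ℕ) < k := by
    ext i
    simp only [topIdx, Finset.mem_sdiff, mem_sliceIdx, Finset.mem_filter_univ]
    omega
  rw [← hsdiff]
  constructor
  · rintro ⟨hjq, hJ⟩
    have hj : j ∉ sliceIdx n q k := fun hj =>
      Finset.notMem_erase j _ (hJ ▸ Finset.mem_union_left J hj)
    refine ⟨by rw [mem_sliceIdx] at hj; omega, ?_⟩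
    rw [← Finset.erase_sdiff_comm, ← hJ, Finset.union_sdiff_cancel_left hd]
  · rintro ⟨hjk, rfl⟩
    have hj : j ∉ sliceIdx n q k := fun hj => hjk.not_ge (mem_sliceIdx.1 hj).1
    refine ⟨hjk.trans_le hkq, ?_⟩
    rw [← Finset.erase_eq_of_notMem hj, ← Finset.erase_union_distrib,
      Finset.erase_eq_of_notMem hj, Finset.union_sdiff_of_subset hsub]

theorem contr_sliceIdx_modelPi (hn : q < n) (hk : 1 ≤ k) (hkq : k ≤ q + 1) (x : Fin n → ℝ) :
    contr n q (k - 1) (sliceIdx n q k) (modelPi n q k x) =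
      (-1 : ℝ) ^ ((q + 1 - k) * (k - 1)) • ellipticSmall n k x := by
  funext J
  have hlt : ∀ j : Fin n, J.1 = (Finset.univ.filter fun i : Fin n => (i : ℕ) < k).erase j →
      ∀ s ∈ sliceIdx n q k, ∀ t ∈ J.1, t < s := by
    intro j hJ s hs t ht
    rw [hJ, Finset.mem_erase, Finset.mem_filter_univ] at ht
    exact Fin.lt_def.2 (ht.2.trans_le (mem_sliceIdx.1 hs).1)
  rw [Pi.smul_apply, smul_eq_mul, ellipticSmall, Finset.mul_sum]
  by_cases hd : Disjoint (sliceIdx n q k) J.1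
  · have hcard : (sliceIdx n q k ∪ J.1).card = q := by
      rw [Finset.card_union_of_disjoint hd, card_sliceIdx hn, J.2]
      omega
    rw [contr, dif_pos ⟨hd, hcard⟩, modelPi, Finset.mul_sum]
    refine Finset.sum_congr rfl fun j _ => ?_
    simp only [sliceIdx_union_eq_erase_iff hkq hd j]
    split_ifs with hj
    · rw [shufSign_of_forall_lt (hlt j hj.2), card_sliceIdx hn, J.2, eps, if_pos hj.1, mul_one]
    · rw [mul_zero, mul_zero]
  · rw [contr, dif_neg fun h => hd h.1, Finset.sum_eq_zero fun j _ => ?_]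
    rw [if_neg, mul_zero]
    exact fun hj => hd (Finset.disjoint_left.2 fun i hi hi' => (hlt j hj.2 i hi i hi').false)

end LinearModel

theorem sliced_is_elliptic_nambu_general {n q k : ℕ} (hn : q < n) (hk : 2 ≤ k) (hkq : k ≤ q + 1)
    {U : Set (Fin n → ℝ)} (hU : IsOpen U) (h0U : (0 : Fin n → ℝ) ∈ U)
    {P : (Fin n → ℝ) → MultiVec n q} (hN : IsNambu n q P U) (hP0 : P 0 = 0)
    (hlin : ∀ v : Fin n → ℝ, fderiv ℝ P 0 v = modelPi n q k v) :
    IsNambu n (k - 1) (fun x => contr n q (k - 1) (sliceIdx n q k) (P x)) U ∧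
      contr n q (k - 1) (sliceIdx n q k) (P 0) = 0 ∧
      (∀ v : Fin n → ℝ,
        fderiv ℝ (fun x => contr n q (k - 1) (sliceIdx n q k) (P x)) 0 v =
          contr n q (k - 1) (sliceIdx n q k) (modelPi n q k v)) ∧
      ∃ s : ℝ, (s = 1 ∨ s = -1) ∧
        ∀ (x : Fin n → ℝ) (J : Idx n (k - 1)),
          contr n q (k - 1) (sliceIdx n q k) (modelPi n q k x) J =
            s * ellipticSmall n k x J := by
  have hdiff : DifferentiableAt ℝ P 0 :=
    (hN.1.contDiffAt (hU.mem_nhds h0U)).differentiableAt (by simp)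
  refine ⟨?_, by rw [hP0, ← contrL_apply, map_zero], fun v => by rw [fderiv_contr hdiff, hlin],
    _, neg_one_pow_eq_or ℝ ((q + 1 - k) * (k - 1)), fun x J => ?_⟩
  · obtain ⟨r, rfl⟩ : ∃ r, q = r + (k - 1) := ⟨q + 1 - k, by omega⟩
    exact hN.slice (by omega) hn.le ⟨_, (card_sliceIdx hn).trans (by omega)⟩
  · rw [contr_sliceIdx_modelPi hn (by omega) hkq, Pi.smul_apply, smul_eq_mul]

/-- Step 1 of the proof of Theorem 1.2 in the paper: the sliced
structure is an elliptic Nambu structure of order `k-1`. If `Π` is a smooth Nambu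
structure of order `q` (with `3 ≤ k ≤ q`) with linear part `Π_{k,q}` at `0`, then
near `0` the sliced `(k-1)`-vector field `Λ = (e*_{k+1} ∧ ⋯ ∧ e*_{q+1}) ⌟ Π` is a
Nambu structure of order `k-1`, whose linear part at `0` is
`(e*_{k+1} ∧ ⋯ ∧ e*_{q+1}) ⌟ Π_{k,q}`, which equals, up to a sign `s`, the
nondegenerate Type 1 elliptic linear Nambu structure of order `k-1` in the
coordinates `x₁,…,x_k`. -/
theorem sliced_is_elliptic_nambu (n q k : ℕ) (hq : 3 ≤ q) (hn : q < n) (hk3 : 3 ≤ k)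
    (hkq : k ≤ q)
    (U : Set (Fin n → ℝ)) (hU : IsOpen U) (h0U : (0 : Fin n → ℝ) ∈ U)
    (P : (Fin n → ℝ) → MultiVec n q) (hN : IsNambu n q P U)
    (hP0 : P 0 = 0) (hlin : ∀ v : Fin n → ℝ, fderiv ℝ P 0 v = modelPi n q k v) :
    ∃ W : Set (Fin n → ℝ), W ⊆ U ∧ (0 : Fin n → ℝ) ∈ W ∧ IsOpen W ∧
      -- the sliced field `Λ` is a Nambu structure of order `k-1` on `W`,
      IsNambu n (k - 1) (fun x => contr n q (k - 1) (sliceIdx n q k) (P x)) W ∧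
      -- its linear part at `0` is the sliced model …
      contr n q (k - 1) (sliceIdx n q k) (P 0) = 0 ∧
      (∀ v : Fin n → ℝ,
        fderiv ℝ (fun x => contr n q (k - 1) (sliceIdx n q k) (P x)) 0 v =
          contr n q (k - 1) (sliceIdx n q k) (modelPi n q k v)) ∧
      -- … which is, up to sign, the elliptic model of order `k-1` in `x₁,…,x_k`.
      ∃ s : ℝ, (s = 1 ∨ s = -1) ∧
        ∀ (x : Fin n → ℝ) (J : Idx n (k - 1)),
          contr n q (k - 1) (sliceIdx n q k) (modelPi n q k x) J =
            s * ellipticSmall n k x J := by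
  exact ⟨U, subset_rfl, h0U, hU,
    sliced_is_elliptic_nambu_general hn (by omega) (by omega) hU h0U hN hP0 hlin⟩

end NambuLin
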